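/- arXiv:2409.00420 — 8 statements merged into one kernel-verified Lean document; each statement's English description precedes it below -/
import Mathlib

section
/- Let n ≥ 1 and let Γ ⊆ ℝⁿ be an open convex cone with vertex at the origin (i.e. 0 ∉ Γ, Γ is open and convex, and tλ ∈ Γ for all λ ∈ Γ, t > 0) which is symmetric (invariant under all permutations of the coordinates), proper (Γ ≠ ℝⁿ), and contains the positive orthant Γₙ = {λ ∈ ℝⁿ : λᵢ > 0 for all i}. Then every λ ∈ Γ satisfies λ₁ + λ₂ + ⋯ + λₙ > 0; that is, Γ ⊆ {λ ∈ ℝⁿ : Σᵢ λᵢ > 0}. -/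
/-!
By symmetry and convexity, `Γ` contains with `x` the average of its cyclic shifts, which is the
constant vector `m = (mean of x, …, mean of x)`. If `∑ i, x i ≤ 0`, then either `m = 0`, or `-m`
lies in the positive orthant and `0` is the midpoint of `m` and `-m`. In both cases `0 ∈ Γ`,
contrary to the assumption that the vertex is not in `Γ`.
-/

/-- A symmetric proper open convex cone `Γ ⊆ ℝⁿ` with vertex at the origin
containing the positive orthant is contained in `{λ : ∑ᵢ λᵢ > 0}`. -/
theorem cone_subset_positive_trace (n : ℕ) (hn : 1 ≤ n) (Γ : Set (Fin n → ℝ))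
    (hopen : IsOpen Γ) (hconv : Convex ℝ Γ) (hvertex : (0 : Fin n → ℝ) ∉ Γ)
    (hcone : ∀ x ∈ Γ, ∀ t : ℝ, 0 < t → t • x ∈ Γ)
    (hsym : ∀ (σ : Equiv.Perm (Fin n)) (x : Fin n → ℝ), x ∈ Γ → x ∘ σ ∈ Γ)
    (hproper : Γ ≠ Set.univ)
    (horthant : {x : Fin n → ℝ | ∀ i, 0 < x i} ⊆ Γ) :
    ∀ x ∈ Γ, 0 < ∑ i, x i := by
  intro x hx
  have : NeZero n := ⟨by omega⟩
  have hn0 : (0 : ℝ) < n := by exact_mod_cast hn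
  -- Averaging `x` over the cyclic shifts of its coordinates gives the constant vector
  -- whose entries are the mean of `x`; it lies in `Γ` by symmetry and convexity.
  have hmean : (fun _ => (n : ℝ)⁻¹ * ∑ i, x i : Fin n → ℝ) ∈ Γ := by
    have h := hconv.sum_mem (t := Finset.univ) (w := fun _ : Fin n => (n : ℝ)⁻¹)
      (z := fun k => x ∘ Equiv.addLeft k) (fun _ _ => by positivity)
      (by simp [hn0.ne']) (fun k _ => hsym _ x hx)
    convert h using 1
    funext j
    simp only [Finset.sum_apply, Pi.smul_apply, Function.comp_apply, smul_eq_mul,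
      ← Finset.mul_sum, Equiv.coe_addLeft]
    rw [← Equiv.sum_comp (Equiv.addRight j) x]
    simp
  by_contra hneg
  rcases (not_lt.mp hneg).lt_or_eq with hlt | heq
  · -- A negative mean puts the opposite constant vector in the orthant, and the
    -- midpoint of the two constant vectors is the excluded vertex.
    have hopp : (fun _ => -((n : ℝ)⁻¹ * ∑ i, x i) : Fin n → ℝ) ∈ Γ :=
      horthant fun _ => neg_pos.mpr (mul_neg_of_pos_of_neg (inv_pos.mpr hn0) hlt)
    have h := hconv hmean hopp (a := 1 / 2) (b := 1 / 2) (by norm_num) (by norm_num)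
      (by norm_num)
    apply hvertex
    convert h using 1
    funext j
    simp
  · apply hvertex
    convert hmean using 1
    funext j
    simp [heq]
end

section
/- Let Γ ⊆ ℝⁿ be a symmetric proper open convex cone with vertex at the origin containing the positive orthant Γₙ, and let f : Γ → ℝ be a smooth symmetric function with ∂f/∂λᵢ > 0 on Γ for every i, f concave, and such that for any σ < sup_Γ f and λ ∈ Γ one has lim_{t→∞} f(tλ) > σ. Let a, b ∈ ℝ with sup_{∂Γ} f < a < b < sup_Γ f and let δ, R > 0. Then there exists a constant κ > 0 such that for every σ ∈ [a,b], every μ ∈ ℝⁿ satisfying (μ − 2δ𝟙 + Γₙ) ∩ ∂Γ^σ ⊆ B_R(0), and every λ ∈ ∂Γ^σ with |λ| > R, one has either Σⱼ₌₁ⁿ (∂f/∂λⱼ)(λ)(μⱼ − λⱼ) > κ · Σₖ₌₁ⁿ (∂f/∂λₖ)(λ), or (∂f/∂λⱼ)(λ) > κ · Σₖ₌₁ⁿ (∂f/∂λₖ)(λ) for every j = 1,…,n. -/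
open Filter

/-!
Let `g` be the gradient of `f` at the given point `x` of the level set `{f = σ}`. Superlevel sets of
the concave function `f` are convex and `g` supports them, so `g · (y - x) ≥ 0` whenever `y ∈ Γ` and
`f y ≥ σ`. The proof applies this to `y = μ - δ𝟙 + T e_j`, where `j` is an index at which the second
alternative fails, `g_j ≤ κ ∑ g_k`. This gives `g · (μ - x) ≥ δ ∑ g_k - T g_j ≥ (δ - T κ) ∑ g_k`,
which exceeds `κ ∑ g_k` once `κ` is small compared with `δ / (1 + T)`.

It remains to find `T`, independent of `σ` and `μ`, for which `f y ≥ σ`. Fix `K ≥ R + δ` with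
`f (K𝟙) > b` and put `T = R + δ + nK`. Since `{f ≥ σ}` is closed in `ℝⁿ` (this is where
`sup_{∂Γ} f < a` enters), a segment joining a point outside it to a point of `{f > σ}` meets
`{f = σ}` (`exists_mem_segment_level`). This is used twice.

* If `f y ≥ σ` fails, the segment from `y` to the coordinatewise maximum of `y` and `K𝟙` (where
  `f > b`, as `f` is increasing) meets the level set at some `w ≥ y`. By the hypothesis on `μ`, `w`
  lies in `B_R(0)`, so `μ_i < R + δ` for all `i`, and even `μ_j < R + δ - T = -nK`.
* The point `K𝟙 - nK e_j` is not in `Γ`, because the average of its permutations is `0`. So the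
  segment from it to `K𝟙` meets the level set at some `p`, with `p_i = K` for `i ≠ j` and
  `p_j ≥ K - nK`.

Then `p > μ - 2δ𝟙`, so `p ∈ B_R(0)`, which contradicts `p_i = K ≥ R` for an index `i ≠ j`. Such an
index exists unless `n = 1`, in which case the second alternative holds for every `κ < 1`.
-/

/-- A concave function lies below its tangent plane. -/
lemma ConcaveOn.le_add_fderiv {E : Type*} [NormedAddCommGroup E] [NormedSpace ℝ E]
    {s : Set E} {f : E → ℝ} (hf : ConcaveOn ℝ s f) {x y : E} (hx : x ∈ s) (hy : y ∈ s)
    (hd : DifferentiableAt ℝ f x) : f y ≤ f x + fderiv ℝ f x (y - x) := by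
  have hc := hf.comp_affineMap (AffineMap.lineMap x y : ℝ →ᵃ[ℝ] E)
  have hder : HasDerivAt (f ∘ (AffineMap.lineMap x y : ℝ →ᵃ[ℝ] E)) (fderiv ℝ f x (y - x)) 0 := by
    have h1 : HasDerivAt (AffineMap.lineMap x y : ℝ →ᵃ[ℝ] E) (y - x) (0 : ℝ) :=
      AffineMap.hasDerivAt_lineMap
    have h2 : HasFDerivAt f (fderiv ℝ f x) ((AffineMap.lineMap x y : ℝ →ᵃ[ℝ] E) 0) := by
      simpa using hd.hasFDerivAt
    exact h2.comp_hasDerivAt 0 h1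
  have h := hc.slope_le_of_hasDerivAt (x := 0) (y := 1) (by simpa using hx) (by simpa using hy)
    one_pos hder
  simp [slope_def_field] at h
  rw [map_sub]
  linarith

/-- If `f` stays below `a` near `∂Γ`, then its superlevel sets at heights `σ ≥ a` do not touch `∂Γ`
and so are closed in the whole space, not merely in `Γ`. -/
lemma isClosed_superlevel {E : Type*} [TopologicalSpace E] {Γ : Set E} (hopen : IsOpen Γ)
    {f : E → ℝ} (hf : ContinuousOn f Γ) {a σ : ℝ}
    (ha : (⨆ x₀ ∈ frontier Γ, Filter.limsup (fun x => (f x : EReal)) (nhdsWithin x₀ Γ))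
      < (a : EReal)) (hσ : a ≤ σ) : IsClosed {x | x ∈ Γ ∧ σ ≤ f x} := by
  refine isClosed_of_closure_subset fun x hx => ?_
  by_cases hxΓ : x ∈ Γ
  · refine ⟨hxΓ, ?_⟩
    by_contra! hlt
    have h1 : ∀ᶠ y in nhds x, f y < σ :=
      (hf.continuousAt (hopen.mem_nhds hxΓ)).eventually_lt_const hlt
    obtain ⟨y, hy, hy'⟩ := ((mem_closure_iff_frequently.1 hx).and_eventually h1).exists
    exact absurd hy' (not_lt.2 hy.2)
  · exfalso
    have hfr : x ∈ frontier Γ := by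
      rw [hopen.frontier_eq]
      exact ⟨closure_mono (fun y hy => hy.1) hx, hxΓ⟩
    have h1 : Filter.limsup (fun x => (f x : EReal)) (nhdsWithin x Γ) < (a : EReal) :=
      (le_iSup₂ (f := fun x₀ (_ : x₀ ∈ frontier Γ) =>
        Filter.limsup (fun x => (f x : EReal)) (nhdsWithin x₀ Γ)) x hfr).trans_lt ha
    have h2 := eventually_nhdsWithin_iff.1 (eventually_lt_of_limsup_lt h1)
    obtain ⟨y, hy, hy'⟩ := ((mem_closure_iff_frequently.1 hx).and_eventually h2).exists
    have := EReal.coe_lt_coe_iff.1 (hy' hy.1)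
    linarith [hy.2]

/-- An intermediate value property along a segment that is allowed to leave `Γ`. -/
lemma exists_mem_segment_level {E : Type*} [NormedAddCommGroup E] [NormedSpace ℝ E] {Γ : Set E}
    (hopen : IsOpen Γ) {f : E → ℝ} (hf : ContinuousOn f Γ) {σ : ℝ}
    (hcl : IsClosed {x | x ∈ Γ ∧ σ ≤ f x}) {y z : E} (hy : ¬ (y ∈ Γ ∧ σ ≤ f y))
    (hz : z ∈ Γ) (hfz : σ < f z) : ∃ w ∈ segment ℝ y z, w ∈ Γ ∧ f w = σ := by
  by_contra! hno
  have hV : IsOpen (Γ ∩ f ⁻¹' Set.Ioi σ) := hf.isOpen_inter_preimage hopen isOpen_Ioi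
  obtain ⟨w, -, hw1, hw2⟩ := (convex_segment (𝕜 := ℝ) y z).isPreconnected _ _ hV hcl.isOpen_compl
    (fun w hw => by
      by_cases h : w ∈ Γ ∧ σ ≤ f w
      · exact Or.inl ⟨h.1, lt_of_le_of_ne h.2 (Ne.symm (hno w hw h.1))⟩
      · exact Or.inr h)
    ⟨z, right_mem_segment ℝ y z, hz, hfz⟩ ⟨y, left_mem_segment ℝ y z, hy⟩
  exact hw2 ⟨hw1.1, le_of_lt hw1.2⟩

/-- The permutations of `K𝟙 - nK e_j` average to `0`, which is not in `Γ`. -/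
lemma const_sub_single_notMem {n : ℕ} {Γ : Set (Fin n → ℝ)} (hconv : Convex ℝ Γ)
    (hvertex : (0 : Fin n → ℝ) ∉ Γ)
    (hΓsym : ∀ (σ : Equiv.Perm (Fin n)) (x : Fin n → ℝ), x ∈ Γ → x ∘ σ ∈ Γ)
    (K : ℝ) (j : Fin n) : (fun i => K - if i = j then n * K else 0) ∉ Γ := by
  intro h
  have hn : (n : ℝ) ≠ 0 := by
    have := j.pos
    positivity
  have hall : ∀ k : Fin n, (fun i => K - if i = k then n * K else 0) ∈ Γ := by
    intro k
    convert hΓsym (Equiv.swap j k) _ h using 1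
    funext i
    have : Equiv.swap j k i = j ↔ i = k := by
      rw [Equiv.swap_apply_eq_iff, Equiv.swap_apply_left]
    simp [this]
  have hmem := hconv.sum_mem (t := Finset.univ) (w := fun _ : Fin n => (n : ℝ)⁻¹)
    (fun _ _ => by positivity) (by simp [hn]) (fun k _ => hall k)
  refine hvertex ?_
  convert hmem using 1
  funext i
  simp [Finset.sum_apply, ← Finset.mul_sum]

lemma le_sqrt_sum_sq {n : ℕ} (x : Fin n → ℝ) (i : Fin n) : x i ≤ Real.sqrt (∑ i, x i ^ 2) :=
  Real.le_sqrt_of_sq_le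
    (Finset.single_le_sum (f := fun i => x i ^ 2) (fun _ _ => sq_nonneg _) (Finset.mem_univ i))

/-- the dichotomy lemma (vector form of Lemma 3.2). -/
theorem dichotomy_lemma (n : ℕ) (hn : 1 ≤ n) (Γ : Set (Fin n → ℝ))
    -- Γ is a symmetric proper open convex cone with vertex at the origin
    -- containing the positive orthant
    (hopen : IsOpen Γ) (hconv : Convex ℝ Γ) (hvertex : (0 : Fin n → ℝ) ∉ Γ)
    (hcone : ∀ x ∈ Γ, ∀ t : ℝ, 0 < t → t • x ∈ Γ)
    (hΓsym : ∀ (σ : Equiv.Perm (Fin n)) (x : Fin n → ℝ), x ∈ Γ → x ∘ σ ∈ Γ)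
    (hproper : Γ ≠ Set.univ)
    (horthant : {x : Fin n → ℝ | ∀ i, 0 < x i} ⊆ Γ)
    -- f is a smooth symmetric function on Γ with positive first derivatives, concave
    (f : (Fin n → ℝ) → ℝ)
    (hsmooth : ContDiffOn ℝ (⊤ : ℕ∞) f Γ)
    (hfsym : ∀ (σ : Equiv.Perm (Fin n)) (x : Fin n → ℝ), x ∈ Γ → f (x ∘ σ) = f x)
    (hmono : ∀ x ∈ Γ, ∀ i, 0 < fderiv ℝ f x (Pi.single i 1))
    (hconc : ConcaveOn ℝ Γ f)
    -- for any σ < sup_Γ f and λ ∈ Γ one has lim_{t→∞} f(tλ) > σ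
    (hlim : ∀ σ : ℝ, (σ : EReal) < (⨆ x ∈ Γ, (f x : EReal)) →
      ∀ x ∈ Γ, ∀ᶠ t : ℝ in atTop, σ < f (t • x))
    -- sup_{∂Γ} f < a < b < sup_Γ f, and δ, R > 0
    (a b : ℝ)
    (ha : (⨆ x₀ ∈ frontier Γ, Filter.limsup (fun x => (f x : EReal)) (nhdsWithin x₀ Γ))
      < (a : EReal))
    (hab : a < b) (hb : (b : EReal) < ⨆ x ∈ Γ, (f x : EReal))
    (δ R : ℝ) (hδ : 0 < δ) (hR : 0 < R) :
    ∃ κ : ℝ, 0 < κ ∧ ∀ σ ∈ Set.Icc a b, ∀ μ : Fin n → ℝ,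
      -- (μ − 2δ𝟙 + Γₙ) ∩ ∂Γ^σ ⊆ B_R(0)
      (∀ x ∈ Γ, f x = σ → (∀ i, μ i - 2 * δ < x i) → Real.sqrt (∑ i, x i ^ 2) < R) →
      -- λ ∈ ∂Γ^σ with |λ| > R
      ∀ x ∈ Γ, f x = σ → R < Real.sqrt (∑ i, x i ^ 2) →
        (κ * ∑ k, fderiv ℝ f x (Pi.single k 1)
            < ∑ j, fderiv ℝ f x (Pi.single j 1) * (μ j - x j)) ∨
        (∀ j, κ * ∑ k, fderiv ℝ f x (Pi.single k 1) < fderiv ℝ f x (Pi.single j 1)) := by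
  classical
  have hcont : ContinuousOn f Γ := hsmooth.continuousOn
  have hdiff : ∀ x ∈ Γ, DifferentiableAt ℝ f x := fun x hx =>
    (hsmooth.contDiffAt (hopen.mem_nhds hx)).differentiableAt (by simp)
  have hexp : ∀ x v : Fin n → ℝ,
      fderiv ℝ f x v = ∑ j, fderiv ℝ f x (Pi.single j 1) * v j := by
    intro x v
    conv_lhs => rw [pi_eq_sum_univ' v]
    rw [map_sum]
    refine Finset.sum_congr rfl fun j _ => ?_
    rw [map_smul, smul_eq_mul, mul_comm]
  have htan : ∀ x ∈ Γ, ∀ y ∈ Γ,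
      f y ≤ f x + ∑ j, fderiv ℝ f x (Pi.single j 1) * (y j - x j) := by
    intro x hx y hy
    have h := hconc.le_add_fderiv hx hy (hdiff x hx)
    rw [hexp] at h
    simpa using h
  obtain ⟨K, hKb, hK⟩ : ∃ K : ℝ, b < f (fun _ => K) ∧ R + δ ≤ K := by
    have h1 : (fun _ => 1 : Fin n → ℝ) ∈ Γ := horthant fun _ => one_pos
    obtain ⟨K, h, h'⟩ := ((hlim b hb _ h1).and (eventually_ge_atTop (R + δ))).exists
    refine ⟨K, ?_, h'⟩
    convert h using 2
    funext i
    simp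
  have hK0 : 0 < K := by linarith
  have hKΓ : (fun _ => K : Fin n → ℝ) ∈ Γ := horthant fun _ => hK0
  have hbig : ∀ z : Fin n → ℝ, (∀ i, K ≤ z i) → z ∈ Γ ∧ b < f z := by
    intro z hz
    have hzΓ : z ∈ Γ := horthant fun i => hK0.trans_le (hz i)
    refine ⟨hzΓ, hKb.trans_le ?_⟩
    have h := htan z hzΓ _ hKΓ
    have h2 : ∑ j, fderiv ℝ f z (Pi.single j 1) * (K - z j) ≤ 0 :=
      Finset.sum_nonpos fun j _ =>
        mul_nonpos_of_nonneg_of_nonpos (hmono z hzΓ j).le (by linarith [hz j])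
    linarith
  set T : ℝ := R + δ + n * K with hT
  have hT0 : 0 < T := by positivity
  have hden : 0 < 2 * (1 + T + δ) := by positivity
  refine ⟨δ / (2 * (1 + T + δ)), by positivity, ?_⟩
  set κ : ℝ := δ / (2 * (1 + T + δ)) with hκ
  have hκ0 : 0 < κ := by positivity
  have hκeq : κ * (2 * (1 + T + δ)) = δ := div_mul_cancel₀ _ hden.ne'
  have hκT : κ * (1 + T) < δ := by nlinarith
  have hκ1 : κ < 1 := by
    rw [hκ, div_lt_one hden]
    linarith
  intro σ hσ μ hμ x hx hfx _
  have hcl := isClosed_superlevel hopen hcont ha hσ.1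
  have hS : ∀ j, fderiv ℝ f x (Pi.single j 1) ≤ ∑ k, fderiv ℝ f x (Pi.single k 1) := fun j =>
    Finset.single_le_sum (f := fun k => fderiv ℝ f x (Pi.single k 1))
      (fun k _ => (hmono x hx k).le) (Finset.mem_univ j)
  by_cases hall : ∀ j, κ * ∑ k, fderiv ℝ f x (Pi.single k 1) < fderiv ℝ f x (Pi.single j 1)
  · exact Or.inr hall
  left
  push Not at hall
  obtain ⟨j, hj⟩ := hall
  have hSpos : 0 < ∑ k, fderiv ℝ f x (Pi.single k 1) := (hmono x hx j).trans_le (hS j)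
  -- For `n = 1` the gradient has a single component, so `hj` contradicts `κ < 1`.
  obtain ⟨i₀, hi₀⟩ : ∃ i, i ≠ j := by
    by_contra! hone
    have : ∑ k, fderiv ℝ f x (Pi.single k 1) = fderiv ℝ f x (Pi.single j 1) :=
      Fintype.sum_eq_single j fun k hk => absurd (hone k) hk
    nlinarith
  have hyσ : (fun i => μ i - δ + if i = j then T else 0) ∈ Γ ∧
      σ ≤ f (fun i => μ i - δ + if i = j then T else 0) := by
    by_contra hy
    set y : Fin n → ℝ := fun i => μ i - δ + if i = j then T else 0 with hydef
    obtain ⟨hzΓ, hfz⟩ := hbig (fun i => max K (y i)) fun i => le_max_left _ _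
    obtain ⟨w, hw, hwΓ, hfw⟩ :=
      exists_mem_segment_level hopen hcont hcl hy hzΓ (hσ.2.trans_lt hfz)
    have hyw : y ≤ w := (segment_subset_Icc (fun i => le_max_right _ _) hw).1
    have hyμ : ∀ i, μ i - δ ≤ y i := fun i => by
      simp only [hydef]
      split_ifs <;> linarith
    have hwR := hμ w hwΓ hfw fun i => by linarith [hyμ i, hyw i]
    have hyR : ∀ i, y i < R := fun i => ((hyw i).trans (le_sqrt_sum_sq w i)).trans_lt hwR
    have hyj : y j = μ j - δ + T := by simp [hydef]
    obtain ⟨p, hp, hpΓ, hfp⟩ := exists_mem_segment_level hopen hcont hcl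
      (fun h => const_sub_single_notMem hconv hvertex hΓsym K j h.1) hKΓ (hσ.2.trans_lt hKb)
    have hnK : 0 ≤ n * K := by positivity
    have hpI := segment_subset_Icc (fun i => by dsimp only; split_ifs <;> linarith) hp
    have hpj : K - n * K ≤ p j := by simpa using hpI.1 j
    have hpi : ∀ i, i ≠ j → K ≤ p i := fun i hi => by simpa [hi] using hpI.1 i
    have hpR := hμ p hpΓ hfp fun i => by
      by_cases hi : i = j
      · subst hi
        linarith [hyR i]
      · linarith [hpi i hi, hyR i, hyμ i]
    linarith [hpi i₀ hi₀, le_sqrt_sum_sq p i₀]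
  have h := htan x hx _ hyσ.1
  have hsplit : ∑ k, fderiv ℝ f x (Pi.single k 1) * ((μ k - δ + if k = j then T else 0) - x k) =
      ∑ k, fderiv ℝ f x (Pi.single k 1) * (μ k - x k)
        - δ * ∑ k, fderiv ℝ f x (Pi.single k 1) + T * fderiv ℝ f x (Pi.single j 1) := by
    have : T * fderiv ℝ f x (Pi.single j 1) =
        ∑ k, fderiv ℝ f x (Pi.single k 1) * (if k = j then T else 0) := by
      simp [mul_comm]
    rw [this, Finset.mul_sum, ← Finset.sum_sub_distrib, ← Finset.sum_add_distrib]
    exact Finset.sum_congr rfl fun k _ => by ring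
  rw [hsplit] at h
  have hTj := mul_le_mul_of_nonneg_left hj hT0.le
  have hκS := mul_lt_mul_of_pos_right hκT hSpos
  linarith [hyσ.2]
end

section
/- Let f : ℝⁿ → ℝ be a concave function which is symmetric, i.e. f(λ_{σ(1)},…,λ_{σ(n)}) = f(λ₁,…,λₙ) for every permutation σ. Then the function F on the real vector space of n×n complex Hermitian matrices defined by F(A) = f(λ(A)), where λ(A) ∈ ℝⁿ is the vector of eigenvalues of A listed in non-increasing order with multiplicity, is concave: F(tA + (1−t)B) ≥ tF(A) + (1−t)F(B) for all Hermitian A, B and t ∈ [0,1]. -/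
/-!
The proof is the Schur–Birkhoff argument. Put `C = tA + (1 - t)B` and let `U` be a unitary matrix
diagonalizing `C`. Taking the diagonal of `U* C U = t U* A U + (1 - t) U* B U` gives
`λ(C) = t a + (1 - t) b`, where `a` and `b` are the diagonals of `U* A U` and `U* B U`, so concavity
gives `f (λ(C)) ≥ t f(a) + (1 - t) f(b)`.

Writing `A = V D V*` with `D` diagonal, `a` is the image of `λ(A)` under the matrix of squared moduli
of the entries of the unitary matrix `U* V`, which is doubly stochastic
(`exists_doublyStochastic_diag`). By Birkhoff's theorem a doubly stochastic matrix is a convex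
combination of permutation matrices, so a symmetric concave function does not decrease under it
(`le_apply_mulVec_of_doublyStochastic`): `f(a) ≥ f(λ(A))`, and likewise `f(b) ≥ f(λ(B))`. The order
of the eigenvalues plays no role since `f` is symmetric.
-/

/-- The eigenvalues of a Hermitian matrix listed in non-increasing order
(with multiplicity). -/
noncomputable def eigDesc {n : ℕ} {A : Matrix (Fin n) (Fin n) ℂ} (hA : A.IsHermitian) :
    Fin n → ℝ :=
  fun i => (hA.eigenvalues ∘ Tuple.sort hA.eigenvalues) i.rev

open Matrix in
/-- Symmetric concave functions are Schur-concave. -/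
lemma le_apply_mulVec_of_doublyStochastic {n : ℕ} {f : (Fin n → ℝ) → ℝ}
    (hconc : ConcaveOn ℝ Set.univ f)
    (hsym : ∀ (σ : Equiv.Perm (Fin n)) (x : Fin n → ℝ), f (x ∘ σ) = f x)
    {M : Matrix (Fin n) (Fin n) ℝ} (hM : M ∈ doublyStochastic ℝ (Fin n)) (x : Fin n → ℝ) :
    f x ≤ f (M *ᵥ x) := by
  obtain ⟨w, hw0, hw1, rfl⟩ := exists_eq_sum_perm_of_mem_doublyStochastic hM
  have key := hconc.le_map_sum (t := Finset.univ) (w := w)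
    (p := fun σ : Equiv.Perm (Fin n) => x ∘ σ) (fun σ _ => hw0 σ) hw1 (fun _ _ => Set.mem_univ _)
  simp only [hsym, smul_eq_mul, ← Finset.sum_mul, hw1, one_mul] at key
  have hx : (∑ σ, w σ • σ.permMatrix ℝ) *ᵥ x = ∑ σ : Equiv.Perm (Fin n), w σ • (x ∘ σ) := by
    simp only [sum_mulVec, smul_mulVec, permMatrix_mulVec]
  rwa [hx]

open Matrix in
lemma normSq_unitary_mem_doublyStochastic {n : ℕ} {W : Matrix (Fin n) (Fin n) ℂ}
    (hW : W ∈ unitaryGroup (Fin n) ℂ) :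
    (of fun i j => Complex.normSq (W i j)) ∈ doublyStochastic ℝ (Fin n) := by
  rw [mem_doublyStochastic_iff_sum]
  refine ⟨fun i j => Complex.normSq_nonneg _, fun i => ?_, fun j => ?_⟩
  · have h := congrFun (congrFun (mem_unitaryGroup_iff.mp hW) i) i
    simp only [mul_apply, star_apply, one_apply_eq, RCLike.star_def, Complex.mul_conj] at h
    exact_mod_cast h
  · have h := congrFun (congrFun (mem_unitaryGroup_iff'.mp hW) j) j
    simp only [mul_apply, star_apply, one_apply_eq, RCLike.star_def,
      ← Complex.normSq_eq_conj_mul_self] at h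
    exact_mod_cast h

open Matrix in
/-- In any orthonormal basis, the diagonal of a Hermitian matrix is the image of its eigenvalue
vector under a doubly stochastic matrix. -/
lemma exists_doublyStochastic_diag {n : ℕ} {A : Matrix (Fin n) (Fin n) ℂ} (hA : A.IsHermitian)
    (U : unitaryGroup (Fin n) ℂ) :
    ∃ M ∈ doublyStochastic ℝ (Fin n), ∀ i,
      (star (U : Matrix (Fin n) (Fin n) ℂ) * A * (U : Matrix (Fin n) (Fin n) ℂ)) i i
        = (((M *ᵥ hA.eigenvalues) i : ℝ) : ℂ) := by
  set W : Matrix (Fin n) (Fin n) ℂ := (star U * hA.eigenvectorUnitary).1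
    with hWdef
  have hW : W ∈ unitaryGroup (Fin n) ℂ := Subtype.property _
  refine ⟨_, normSq_unitary_mem_doublyStochastic hW, fun i => ?_⟩
  have hA' : star (U : Matrix (Fin n) (Fin n) ℂ) * A * (U : Matrix (Fin n) (Fin n) ℂ)
      = W * diagonal (RCLike.ofReal ∘ hA.eigenvalues) * star W := by
    conv_lhs => rw [hA.spectral_theorem]
    simp [hWdef, Unitary.conjStarAlgAut_apply, mul_assoc]
  rw [hA', mul_apply]
  simp only [mul_diagonal, star_apply, mulVec, dotProduct, of_apply, Complex.ofReal_sum,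
    Complex.ofReal_mul, Complex.normSq_eq_conj_mul_self, RCLike.star_def, Function.comp_apply]
  refine Finset.sum_congr rfl fun j _ => ?_
  rw [mul_right_comm, mul_comm (W i j)]
  rfl

lemma apply_eigDesc {n : ℕ} {f : (Fin n → ℝ) → ℝ}
    (hsym : ∀ (σ : Equiv.Perm (Fin n)) (x : Fin n → ℝ), f (x ∘ σ) = f x)
    {A : Matrix (Fin n) (Fin n) ℂ} (hA : A.IsHermitian) :
    f (eigDesc hA) = f hA.eigenvalues :=
  hsym (Fin.revPerm.trans (Tuple.sort hA.eigenvalues)) hA.eigenvalues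

/-- if `f : ℝⁿ → ℝ` is concave and symmetric, then `F(A) = f(λ(A))`
is concave on Hermitian matrices. -/
theorem concave_symmetric_eigenvalue_map (n : ℕ) (f : (Fin n → ℝ) → ℝ)
    (hconc : ConcaveOn ℝ Set.univ f)
    (hsym : ∀ (σ : Equiv.Perm (Fin n)) (x : Fin n → ℝ), f (x ∘ σ) = f x)
    (A B : Matrix (Fin n) (Fin n) ℂ) (hA : A.IsHermitian) (hB : B.IsHermitian)
    (t : ℝ) (ht0 : 0 ≤ t) (ht1 : t ≤ 1)
    (hC : (t • A + (1 - t) • B).IsHermitian) :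
    t * f (eigDesc hA) + (1 - t) * f (eigDesc hB) ≤ f (eigDesc hC) := by
  rw [apply_eigDesc hsym, apply_eigDesc hsym, apply_eigDesc hsym]
  set U := hC.eigenvectorUnitary with hU
  obtain ⟨M, hM, hMA⟩ := exists_doublyStochastic_diag hA U
  obtain ⟨N, hN, hNB⟩ := exists_doublyStochastic_diag hB U
  have hdiag : hC.eigenvalues
      = t • M.mulVec hA.eigenvalues + (1 - t) • N.mulVec hB.eigenvalues := by
    funext i
    have h := congrFun (congrFun hC.conjStarAlgAut_star_eigenvectorUnitary i) i
    rw [Unitary.conjStarAlgAut_star_apply, ← hU, mul_add, add_mul, Matrix.mul_smul,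
      Matrix.mul_smul, Matrix.smul_mul, Matrix.smul_mul, Matrix.add_apply, Matrix.smul_apply,
      Matrix.smul_apply, hMA, hNB, Matrix.diagonal_apply_eq] at h
    have h' := congrArg Complex.re h
    simp at h'
    simp [h']
  have h1 := hconc.2 (Set.mem_univ (M.mulVec hA.eigenvalues))
    (Set.mem_univ (N.mulVec hB.eigenvalues)) ht0 (sub_nonneg.mpr ht1) (by ring)
  rw [← hdiag] at h1
  refine le_trans (add_le_add ?_ ?_) h1
  · exact mul_le_mul_of_nonneg_left (le_apply_mulVec_of_doublyStochastic hconc hsym hM _) ht0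
  · exact mul_le_mul_of_nonneg_left (le_apply_mulVec_of_doublyStochastic hconc hsym hN _)
      (sub_nonneg.mpr ht1)
end

section
/- Let Γ ⊆ ℝⁿ be a convex set which is invariant under all permutations of the coordinates. Then the set of n×n complex Hermitian matrices A whose eigenvalue vector λ(A) (eigenvalues listed in non-increasing order with multiplicity) belongs to Γ is a convex subset of the real vector space of n×n Hermitian matrices. -/
open Matrix in
lemma mulVec_mem_of_doublyStochastic {n : ℕ} {Γ : Set (Fin n → ℝ)} (hconv : Convex ℝ Γ)
    (hsym : ∀ (σ : Equiv.Perm (Fin n)) (x : Fin n → ℝ), x ∈ Γ → x ∘ σ ∈ Γ)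
    {S : Matrix (Fin n) (Fin n) ℝ} (hS : S ∈ doublyStochastic ℝ (Fin n))
    {x : Fin n → ℝ} (hx : x ∈ Γ) : S *ᵥ x ∈ Γ := by
  obtain ⟨w, hw0, hw1, rfl⟩ := exists_eq_sum_perm_of_mem_doublyStochastic hS
  have h : (∑ σ, w σ • σ.permMatrix ℝ) *ᵥ x = ∑ σ, w σ • (x ∘ σ) := by
    simp [Matrix.sum_mulVec, Matrix.smul_mulVec, Matrix.permMatrix_mulVec]
  rw [h]
  exact hconv.sum_mem (fun σ _ => hw0 σ) hw1 fun σ _ => hsym σ x hx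

lemma normSq_mem_doublyStochastic {n : ℕ} {W : Matrix (Fin n) (Fin n) ℂ}
    (hW : W ∈ Matrix.unitaryGroup (Fin n) ℂ) :
    (Matrix.of fun i j => Complex.normSq (W i j)) ∈ doublyStochastic ℝ (Fin n) := by
  rw [mem_doublyStochastic_iff_sum]
  refine ⟨fun i j => Complex.normSq_nonneg _, fun i => ?_, fun j => ?_⟩
  · have h := congrFun (congrFun (Matrix.mem_unitaryGroup_iff.1 hW) i) i
    simp only [Matrix.mul_apply, Matrix.star_apply, Matrix.one_apply_eq, RCLike.star_def,
      Complex.mul_conj] at h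
    exact_mod_cast h
  · have h := congrFun (congrFun (Matrix.mem_unitaryGroup_iff'.1 hW) j) j
    simp only [Matrix.mul_apply, Matrix.star_apply, Matrix.one_apply_eq, RCLike.star_def,
      ← Complex.normSq_eq_conj_mul_self] at h
    exact_mod_cast h

/-- Consequence of Schur's theorem: the diagonal of `Uᴴ * A * U` is the image of the eigenvalue vector
of `A` under the doubly stochastic matrix `|(Uᴴ * V) i j|²`, where `V` diagonalizes `A`. -/
lemma diag_conj_mem {n : ℕ} {Γ : Set (Fin n → ℝ)} (hconv : Convex ℝ Γ)
    (hsym : ∀ (σ : Equiv.Perm (Fin n)) (x : Fin n → ℝ), x ∈ Γ → x ∘ σ ∈ Γ)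
    {A : Matrix (Fin n) (Fin n) ℂ} (hA : A.IsHermitian) (hx : hA.eigenvalues ∈ Γ)
    (U : Matrix.unitaryGroup (Fin n) ℂ) :
    (fun i => ((star (U : Matrix (Fin n) (Fin n) ℂ) * A * U) i i).re) ∈ Γ := by
  set V := hA.eigenvectorUnitary
  have key := mulVec_mem_of_doublyStochastic hconv hsym
    (normSq_mem_doublyStochastic (star U * V).2) hx
  convert key using 1
  have hAV : star U.1 * A * U.1 =
      (star U * V).1 *
        Matrix.diagonal (RCLike.ofReal ∘ hA.eigenvalues) *
        star (star U * V).1 := by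
    have hs := hA.spectral_theorem
    rw [Unitary.conjStarAlgAut_apply] at hs
    conv_lhs => rw [hs]
    simp [V, Matrix.mul_assoc]
  rw [hAV]
  generalize (star U * V).1 = W
  ext i
  rw [Matrix.mul_apply, Complex.re_sum]
  simp only [Matrix.mulVec, dotProduct, Matrix.of_apply, Matrix.mul_diagonal, Matrix.star_apply]
  refine Finset.sum_congr rfl fun j _ => ?_
  simp [Complex.normSq_apply]
  ring

lemma eigDesc_mem_iff {n : ℕ} {Γ : Set (Fin n → ℝ)}
    (hsym : ∀ (σ : Equiv.Perm (Fin n)) (x : Fin n → ℝ), x ∈ Γ → x ∘ σ ∈ Γ)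
    {A : Matrix (Fin n) (Fin n) ℂ} (hA : A.IsHermitian) :
    eigDesc hA ∈ Γ ↔ hA.eigenvalues ∈ Γ := by
  set τ : Equiv.Perm (Fin n) := Fin.revPerm.trans (Tuple.sort hA.eigenvalues)
  have h : eigDesc hA = hA.eigenvalues ∘ τ := rfl
  refine ⟨fun hm => ?_, fun hm => h ▸ hsym τ _ hm⟩
  have h2 := hsym τ.symm _ hm
  rwa [h, Function.comp_assoc, Equiv.self_comp_symm, Function.comp_id] at h2

/-- if `Γ ⊆ ℝⁿ` is convex and invariant under coordinate permutations, then
the set of Hermitian matrices `A` with `λ(A) ∈ Γ` is a convex subset of the real vector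
space of matrices. -/
theorem convex_eigenvalue_preimage (n : ℕ) (Γ : Set (Fin n → ℝ))
    (hconv : Convex ℝ Γ)
    (hsym : ∀ (σ : Equiv.Perm (Fin n)) (x : Fin n → ℝ), x ∈ Γ → x ∘ σ ∈ Γ) :
    Convex ℝ {A : Matrix (Fin n) (Fin n) ℂ | ∃ hA : A.IsHermitian, eigDesc hA ∈ Γ} := by
  rintro A ⟨hA, hAm⟩ B ⟨hB, hBm⟩ a b ha hb hab
  rw [eigDesc_mem_iff hsym] at hAm hBm
  have hC : (a • A + b • B).IsHermitian :=
    (hA.smul (IsSelfAdjoint.all a)).add (hB.smul (IsSelfAdjoint.all b))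
  refine ⟨hC, (eigDesc_mem_iff hsym hC).2 ?_⟩
  set U := hC.eigenvectorUnitary
  have key := hconv (diag_conj_mem hconv hsym hA hAm U) (diag_conj_mem hconv hsym hB hBm U)
    ha hb hab
  convert key using 1
  have hd := hC.conjStarAlgAut_star_eigenvectorUnitary
  rw [Unitary.conjStarAlgAut_star_apply] at hd
  ext i
  have hi := congrArg Complex.re (congrFun (congrFun hd i) i)
  simp [Matrix.mul_add, Matrix.add_mul] at hi
  simpa [U] using hi.symm
end

section
/- Let m ≥ 1 and let M be a real symmetric positive semidefinite 2m×2m matrix, with indices ordered so that under the identification ℂᵐ ≅ ℝ^{2m}, z = x + iy, the first m coordinates are x₁,…,x_m and the last m are y₁,…,y_m. Define the complex m×m matrix H by H_{jk} = (1/4)·(M_{j,k} + M_{m+j,m+k} + i(M_{j,m+k} − M_{m+j,k})). Then H is Hermitian and det M ≤ 2^{2m} (det H)². -/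
/-!
Write `M` in `m × m` blocks `A, B, C, D`, and let `W` be the complex matrix with blocks
`1, 1, i, -i`, the change from real coordinates to `(z, z̄)`. It satisfies `Wᴴ W = 2`, and `Wᴴ M W`
is a positive semidefinite matrix with diagonal blocks `4H` and `4Hᵀ`. Fischer's inequality
(`fischer_det_le`: the determinant is at most the product of the determinants of the two diagonal
blocks) therefore gives `2^{2m} det M ≤ 4^{2m} (det H)²`, which is the claim. Fischer's inequality
is only needed for definite matrices: if `det M = 0` the claim is trivial, as `det H` is real.

Fischer's inequality follows from the Schur complement formula, because the determinant is
monotone on positive semidefinite matrices (`det_le_det_add`); this reduces, by congruence, to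
`1 ≤ det (1 + X)` for `X` positive semidefinite, which is read off the eigenvalues of `X`.
-/

/-- The complex `m×m` matrix built from a real `2m×2m` matrix `M` by
`H_{jk} = (1/4)(M_{j,k} + M_{m+j,m+k} + i(M_{j,m+k} − M_{m+j,k}))`
(the complex Hessian when `M` is the real Hessian). -/
noncomputable def cplxOfReal (m : ℕ) (M : Matrix (Fin (2 * m)) (Fin (2 * m)) ℝ) :
    Matrix (Fin m) (Fin m) ℂ :=
  Matrix.of fun j k =>
    (1 / 4 : ℂ) *
      (((M ⟨j, by have := j.isLt; omega⟩ ⟨k, by have := k.isLt; omega⟩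
          + M ⟨m + j, by have := j.isLt; omega⟩ ⟨m + k, by have := k.isLt; omega⟩ : ℝ) : ℂ)
        + Complex.I *
          ((M ⟨j, by have := j.isLt; omega⟩ ⟨m + k, by have := k.isLt; omega⟩
            - M ⟨m + j, by have := j.isLt; omega⟩ ⟨k, by have := k.isLt; omega⟩ : ℝ) : ℂ))

namespace BlockiAux

open Matrix
open scoped MatrixOrder ComplexOrder

variable {n p : Type*} [Fintype n] [DecidableEq n] [Fintype p] [DecidableEq p]

lemma one_le_det_one_add {X : Matrix n n ℂ} (hX : X.PosSemidef) : 1 ≤ (1 + X).det := by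
  have hdet : (1 + X).det = ∏ i, ((1 + hX.1.eigenvalues i : ℝ) : ℂ) := by
    have h1 : (1 + X).det = (-1) ^ Fintype.card n * X.charpoly.eval (-1) := by
      rw [eval_charpoly, ← det_neg]
      congr 1
      rw [map_neg, map_one]
      abel
    rw [h1, hX.1.charpoly_eq, Polynomial.eval_prod, ← Finset.card_univ, ← Finset.prod_const,
      ← Finset.prod_mul_distrib]
    refine Finset.prod_congr rfl fun i _ => ?_
    simp
    ring
  rw [hdet, ← Complex.ofReal_prod, ← Complex.ofReal_one, Complex.real_le_real]
  refine Finset.one_le_prod fun i _ => ?_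
  linarith [hX.eigenvalues_nonneg i]

lemma exists_eq_conjTranspose_mul_self {𝕜 : Type*} [RCLike 𝕜] {X : Matrix n n 𝕜}
    (hX : X.PosSemidef) : ∃ Y : Matrix n n 𝕜, X = Yᴴ * Y :=
  CStarAlgebra.nonneg_iff_eq_star_mul_self.mp (nonneg_iff_posSemidef.mpr hX)

/-- The determinant is monotone on positive semidefinite matrices. For nonsingular `X = Yᴴ Y`,
factor `X + Z = Yᴴ (1 + Y⁻ᴴ Z Y⁻¹) Y`. -/
lemma det_le_det_add {X Z : Matrix n n ℂ} (hX : X.PosSemidef) (hZ : Z.PosSemidef) :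
    X.det ≤ (X + Z).det := by
  by_cases h0 : X.det = 0
  · rw [h0]
    exact (hX.add hZ).det_nonneg
  obtain ⟨Y, rfl⟩ := exists_eq_conjTranspose_mul_self hX
  have hY : IsUnit Y.det := by
    rw [det_mul] at h0
    exact (right_ne_zero_of_mul h0).isUnit
  have hfac : Yᴴ * Y + Z = Yᴴ * (1 + (Y⁻¹)ᴴ * Z * Y⁻¹) * Y := by
    have h1 : Yᴴ * (Y⁻¹)ᴴ = 1 := by
      rw [← conjTranspose_mul, nonsing_inv_mul _ hY, conjTranspose_one]
    calc Yᴴ * Y + Z = Yᴴ * Y + (Yᴴ * (Y⁻¹)ᴴ) * Z * (Y⁻¹ * Y) := by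
          rw [h1, nonsing_inv_mul _ hY, Matrix.one_mul, Matrix.mul_one]
      _ = _ := by simp only [Matrix.mul_add, Matrix.add_mul, Matrix.mul_one, Matrix.mul_assoc]
  have h2 := one_le_det_one_add (hZ.conjTranspose_mul_mul_same Y⁻¹)
  calc (Yᴴ * Y).det = (Yᴴ * Y).det * 1 := (mul_one _).symm
    _ ≤ (Yᴴ * Y).det * (1 + (Y⁻¹)ᴴ * Z * Y⁻¹).det :=
        mul_le_mul_of_nonneg_left h2 hX.det_nonneg
    _ = (Yᴴ * Y + Z).det := by
        rw [hfac]
        simp only [det_mul]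
        ring

/-- **Fischer's inequality** for positive definite block matrices. -/
lemma fischer_det_le {P : Matrix n n ℂ} {S : Matrix n p ℂ} {T : Matrix p n ℂ} {Q : Matrix p p ℂ}
    (h : (fromBlocks P S T Q).PosDef) : (fromBlocks P S T Q).det ≤ P.det * Q.det := by
  have hT : T = Sᴴ := by
    have := (isHermitian_fromBlocks_iff.mp h.1).2.1
    exact this.symm
  subst hT
  have hP : P.PosDef := h.submatrix (e := Sum.inl) Sum.inl_injective
  have : Invertible P := hP.isUnit.invertible
  have hSchur : (Q - Sᴴ * P⁻¹ * S).PosSemidef := (hP.fromBlocks₁₁ S Q).mp h.posSemidef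
  have hCorr : (Sᴴ * P⁻¹ * S).PosSemidef := hP.inv.posSemidef.conjTranspose_mul_mul_same S
  rw [det_fromBlocks₁₁, invOf_eq_nonsing_inv]
  refine mul_le_mul_of_nonneg_left ?_ hP.posSemidef.det_nonneg
  simpa using det_le_det_add hSchur hCorr

lemma posSemidef_map_ofReal {X : Matrix n n ℝ} (hX : X.PosSemidef) :
    (X.map Complex.ofReal).PosSemidef := by
  obtain ⟨Y, rfl⟩ := exists_eq_conjTranspose_mul_self hX
  have : (Yᴴ * Y).map Complex.ofReal = (Y.map Complex.ofReal)ᴴ * Y.map Complex.ofReal := by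
    ext i j
    simp [Matrix.mul_apply]
  rw [this]
  exact posSemidef_conjTranspose_mul_self _

/-- The change of coordinates from `(x, y)` to `(z, z̄)`, up to a scalar. -/
noncomputable def toZ (n : Type*) [DecidableEq n] : Matrix (n ⊕ n) (n ⊕ n) ℂ :=
  fromBlocks 1 1 (Complex.I • 1) (-(Complex.I • 1))

lemma det_toZ : (toZ n)ᴴ.det * (toZ n).det = 2 ^ (2 * Fintype.card n) := by
  have h : (toZ n)ᴴ * toZ n = (2 : ℂ) • 1 := by
    rw [toZ, fromBlocks_conjTranspose, fromBlocks_multiply, ← fromBlocks_one, fromBlocks_smul]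
    simp [smul_smul, ← two_smul ℂ (1 : Matrix n n ℂ)]
  rw [← det_mul, h, det_smul, det_one, mul_one, Fintype.card_sum, two_mul]

lemma toZ_conj (A B C D : Matrix n n ℂ) :
    (toZ n)ᴴ * fromBlocks A B C D * toZ n =
      fromBlocks (A + D + Complex.I • (B - C)) (A - D - Complex.I • (B + C))
        (A - D + Complex.I • (B + C)) (A + D - Complex.I • (B - C)) := by
  rw [toZ, fromBlocks_conjTranspose, fromBlocks_multiply, fromBlocks_multiply]
  ext (i | i) (j | j) <;> simp <;> ring_nf <;> simp <;> ring

/-- The inequality in block form; `G` is four times the complex matrix attached to the real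
matrix with blocks `A, B, C, D`. The singular case is left aside, so that Fischer's inequality
applies to a positive definite matrix. -/
lemma det_fromBlocks_le {A B C D : Matrix n n ℝ} (h : (fromBlocks A B C D).PosSemidef)
    (G : Matrix n n ℂ)
    (hG : G = A.map Complex.ofReal + D.map Complex.ofReal
      + Complex.I • (B.map Complex.ofReal - C.map Complex.ofReal)) :
    (2 : ℂ) ^ (2 * Fintype.card n) * ((fromBlocks A B C D).det : ℂ) ≤ G.det ^ 2 ∨
      (fromBlocks A B C D).det = 0 := by
  by_cases h0 : (fromBlocks A B C D).det = 0
  · exact Or.inr h0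
  left
  obtain ⟨hA, hBC, -, hD⟩ := isHermitian_fromBlocks_iff.mp h.1
  have hGt : A.map Complex.ofReal + D.map Complex.ofReal
      - Complex.I • (B.map Complex.ofReal - C.map Complex.ofReal) = Gᵀ := by
    rw [hG, ← hBC]
    ext i j
    have h1 := hA.apply i j
    have h2 := hD.apply i j
    simp only [star_trivial] at h1 h2
    simp [h1, h2]
    ring
  have hmap := posSemidef_map_ofReal h
  have hdet : ((fromBlocks A B C D).map Complex.ofReal).det = ((fromBlocks A B C D).det : ℂ) :=
    (Complex.ofRealHom.map_det _).symm
  have hN := hmap.conjTranspose_mul_mul_same (toZ n)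
  have hNdet : ((toZ n)ᴴ * (fromBlocks A B C D).map Complex.ofReal * toZ n).det
      = 2 ^ (2 * Fintype.card n) * ((fromBlocks A B C D).det : ℂ) := by
    rw [det_mul, det_mul, hdet, ← det_toZ]
    ring
  have hN' := hN.posDef_iff_det_ne_zero.mpr (by
    rw [hNdet]
    exact mul_ne_zero (by simp) (by exact_mod_cast h0))
  rw [← hNdet]
  rw [fromBlocks_map, toZ_conj, hGt, ← hG] at hN' ⊢
  simpa [sq] using fischer_det_le hN'

/-- Splitting of `2m` coordinates into the first `m` and the last `m`. -/
def splitEquiv (m : ℕ) : Fin m ⊕ Fin m ≃ Fin (2 * m) :=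
  finSumFinEquiv.trans (finCongr (two_mul m).symm)

end BlockiAux

open BlockiAux in
/-- Błocki's inequality `det M ≤ 2^{2m} (det H)²` for a real symmetric
positive semidefinite `2m×2m` matrix `M` and its associated complex Hermitian matrix `H`. -/
theorem blocki_det_inequality (m : ℕ) (hm : 1 ≤ m)
    (M : Matrix (Fin (2 * m)) (Fin (2 * m)) ℝ) (hM : M.PosSemidef) :
    (cplxOfReal m M).IsHermitian ∧
      M.det ≤ 2 ^ (2 * m) * ((cplxOfReal m M).det.re) ^ 2 := by
  have hsymm : ∀ i j, M j i = M i j := fun i j => by simpa using hM.1.apply i j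
  have hH : (cplxOfReal m M).IsHermitian := by
    refine Matrix.IsHermitian.ext fun j k => ?_
    simp only [cplxOfReal, Matrix.of_apply]
    rw [hsymm ⟨j, _⟩ ⟨k, _⟩, hsymm ⟨m + j, _⟩ ⟨m + k, _⟩, hsymm ⟨j, _⟩ ⟨m + k, _⟩,
      hsymm ⟨m + j, _⟩ ⟨k, _⟩]
    simp
    ring
  refine ⟨hH, ?_⟩
  set H := cplxOfReal m M with hHdef
  -- The determinant of a Hermitian matrix is real.
  have hreal : H.det = (H.det.re : ℂ) := by
    refine (Complex.conj_eq_iff_re.mp ?_).symm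
    have := Matrix.det_conjTranspose H
    rw [hH.eq] at this
    exact this.symm
  let N := M.submatrix (splitEquiv m) (splitEquiv m)
  have hNdet : N.det = M.det := Matrix.det_submatrix_equiv_self _ _
  have hN : (Matrix.fromBlocks N.toBlocks₁₁ N.toBlocks₁₂ N.toBlocks₂₁ N.toBlocks₂₂).PosSemidef := by
    rw [Matrix.fromBlocks_toBlocks]
    exact hM.submatrix _
  have key := det_fromBlocks_le hN ((4 : ℂ) • H) (by
    ext j k
    have e1 : ∀ i : Fin m, splitEquiv m (Sum.inl i) = ⟨i, by omega⟩ := fun i => rfl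
    have e2 : ∀ i : Fin m, splitEquiv m (Sum.inr i) = ⟨m + i, by omega⟩ := fun i => rfl
    simp [hHdef, cplxOfReal, N, Matrix.toBlocks₁₁, Matrix.toBlocks₁₂, Matrix.toBlocks₂₁,
      Matrix.toBlocks₂₂, e1, e2])
  rw [Matrix.fromBlocks_toBlocks, hNdet] at key
  rcases key with key | key
  · rw [Matrix.det_smul, hreal, Fintype.card_fin] at key
    have key' : (2 : ℝ) ^ (2 * m) * M.det ≤ (4 ^ m * H.det.re) ^ 2 := by exact_mod_cast key
    have h4 : ((4 : ℝ) ^ m * H.det.re) ^ 2 = 2 ^ (2 * m) * (2 ^ (2 * m) * H.det.re ^ 2) := by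
      rw [pow_mul]
      norm_num
      ring
    rw [h4] at key'
    exact le_of_mul_le_mul_left key' (by positivity)
  · rw [key]
    positivity
end

section
/- Let n ≥ 1, let J₀ be the 2n×2n real block-diagonal matrix with n diagonal 2×2 blocks [[0,−1],[1,0]], and let H be a 2n×2n complex Hermitian positive semidefinite matrix. Then det H ≤ 2^{2n} · det( (1/2)(H + J₀ᵀ H̄ J₀) ), where H̄ denotes the entrywise complex conjugate of H. -/
/-!
Pulling the factor `1/2` out of the `2n × 2n` determinant cancels `2 ^ (2 * n)`, so the claim is
`det H ≤ det (H + K)` with `K = J₀ᵀ H̄ J₀`. Since `J₀` is real and `H̄ = Hᵀ`, the matrix `K` is a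
congruence `J₀ᴴ Hᵀ J₀` of a positive semidefinite matrix, hence positive semidefinite, and the
inequality is the monotonicity of the determinant on positive semidefinite matrices
(`det_re_le_det_add_re`). That in turn reduces by congruence to `1 ≤ det (1 + D)` for `D`
positive semidefinite (`one_le_det_one_add`), read off from the eigenvalues of `D`.
-/

open Matrix
open scoped ComplexOrder

/-- The standard complex structure: the `2n×2n` block-diagonal matrix with `n` diagonal
`2×2` blocks `[[0,−1],[1,0]]`. -/
def J0 (n : ℕ) : Matrix (Fin (2 * n)) (Fin (2 * n)) ℝ :=
  Matrix.of fun i j =>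
    if (i : ℕ) = (j : ℕ) + 1 ∧ (j : ℕ) % 2 = 0 then 1
    else if (j : ℕ) = (i : ℕ) + 1 ∧ (i : ℕ) % 2 = 0 then -1
    else 0

/-- `J0` as a complex matrix. -/
noncomputable def J0C (n : ℕ) : Matrix (Fin (2 * n)) (Fin (2 * n)) ℂ :=
  (J0 n).map Complex.ofReal

lemma one_le_det_one_add {ι : Type*} [Fintype ι] [DecidableEq ι]
    {D : Matrix ι ι ℂ} (hD : D.PosSemidef) : (1 : ℂ) ≤ (1 + D).det := by
  have hspec := hD.1.spectral_theorem
  rw [Unitary.conjStarAlgAut_apply] at hspec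
  have h : (1 + D).det = ∏ i, (1 + (hD.1.eigenvalues i : ℂ)) := by
    conv_lhs => rw [hspec]
    rw [det_one_add_mul_comm, ← Matrix.mul_assoc, Unitary.coe_star_mul_self, Matrix.one_mul,
      ← diagonal_one, diagonal_add, det_diagonal]
    rfl
  have hr : (1 : ℝ) ≤ ∏ i, (1 + hD.1.eigenvalues i) := by
    calc (1 : ℝ) = ∏ _i : ι, (1 : ℝ) := by simp
      _ ≤ _ := Finset.prod_le_prod (fun _ _ => zero_le_one)
        fun i _ => by linarith [hD.eigenvalues_nonneg i]
  rw [h]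
  exact_mod_cast hr

/-- If `A` is singular, the left side vanishes. Otherwise `A = Cᴴ C` with `C` invertible, and
`A + B = Cᴴ (1 + D) C` with `D = C⁻ᴴ B C⁻¹` positive semidefinite. -/
lemma det_re_le_det_add_re {ι : Type*} [Fintype ι] [DecidableEq ι]
    {A B : Matrix ι ι ℂ} (hA : A.PosSemidef) (hB : B.PosSemidef) :
    A.det.re ≤ (A + B).det.re := by
  by_cases h0 : A.det = 0
  · rw [h0]
    exact (Complex.le_def.1 (hA.add hB).det_nonneg).1
  · obtain ⟨C, rfl⟩ : ∃ C : Matrix ι ι ℂ, A = Cᴴ * C := by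
      open scoped MatrixOrder in
      exact CStarAlgebra.nonneg_iff_eq_star_mul_self.mp hA.nonneg
    have hC : IsUnit C.det := by
      rw [det_mul] at h0
      exact (right_ne_zero_of_mul h0).isUnit
    have hC' : IsUnit Cᴴ.det := by
      rw [det_conjTranspose]; exact hC.star
    have hD : ((C⁻¹)ᴴ * B * C⁻¹).PosSemidef := hB.conjTranspose_mul_mul_same _
    have e : Cᴴ * C + B = Cᴴ * (1 + (C⁻¹)ᴴ * B * C⁻¹) * C := by
      have e1 : Cᴴ * ((C⁻¹)ᴴ * B * C⁻¹) * C = B := by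
        rw [conjTranspose_nonsing_inv]
        simp only [Matrix.mul_assoc]
        rw [nonsing_inv_mul _ hC, Matrix.mul_one, mul_nonsing_inv_cancel_left _ _ hC']
      rw [Matrix.mul_add, Matrix.add_mul, Matrix.mul_one, e1]
    have key : (Cᴴ * C).det ≤ (Cᴴ * C + B).det := by
      have h1 : (Cᴴ * C + B).det = (Cᴴ * C).det * (1 + (C⁻¹)ᴴ * B * C⁻¹).det := by
        rw [e, det_mul, det_mul, det_mul]; ring
      rw [h1]
      exact le_mul_of_one_le_right hA.det_nonneg (one_le_det_one_add hD)
    exact (Complex.le_def.1 key).1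

/-- Sroka's inequality `det H ≤ 2^{2n} det((H + J₀ᵀ H̄ J₀)/2)` for a Hermitian
positive semidefinite `2n×2n` matrix `H`. -/
theorem sroka_det_inequality (n : ℕ) (hn : 1 ≤ n)
    (H : Matrix (Fin (2 * n)) (Fin (2 * n)) ℂ) (hH : H.PosSemidef) :
    H.det.re
      ≤ 2 ^ (2 * n) *
        ((1 / 2 : ℂ) • (H + (J0C n)ᵀ * H.map (starRingEnd ℂ) * J0C n)).det.re := by
  have hJ : (J0C n)ᵀ = (J0C n)ᴴ := by
    ext i j
    simp [J0C]
  have hbar : H.map (starRingEnd ℂ) = Hᵀ := by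
    ext i j
    exact hH.1.apply j i
  have hK : ((J0C n)ᵀ * H.map (starRingEnd ℂ) * J0C n).PosSemidef := by
    rw [hJ, hbar]
    exact hH.transpose.conjTranspose_mul_mul_same _
  have hscale : (1 / 2 : ℂ) ^ (2 * n) = (((1 / 2 : ℝ) ^ (2 * n) : ℝ) : ℂ) := by
    push_cast; rfl
  rw [det_smul, Fintype.card_fin, hscale, Complex.re_ofReal_mul, ← mul_assoc, ← mul_pow]
  norm_num
  exact det_re_le_det_add_re hH hK
end

section
/- Let n ≥ 2, μ ∈ ℝⁿ, and let D be the 2n×2n real diagonal matrix D = diag(μ₁, μ₁, μ₂, μ₂, …, μₙ, μₙ). For 1 ≤ r < s ≤ n let E_{2r−1,2s} be the 2n×2n real matrix whose entries are 1 at positions (2r−1,2s) and (2s,2r−1), −1 at positions (2r,2s−1) and (2s−1,2r), and 0 elsewhere. Then for all t, λ ∈ ℝ: det(D + t·E_{2r−1,2s} − λ·Id) = (λ² − λ(μ_r + μ_s) + μ_r μ_s − t²)² · ∏_{k ∈ {1,…,n}, k ≠ r, s} (μ_k − λ)². -/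
/-!
After exchanging the two indices `2s` and `2s+1`, the matrix `D + t·E - λ·Id` becomes the direct sum
of two `n × n` matrices, each with diagonal `μ - λ` and only off-diagonal entries `±t` at `(r, s)`
and `(s, r)` (`submatrix_decouple`). By the Leibniz formula each summand has determinant
`((μ_r - λ)(μ_s - λ) - t²) ∏_{k ≠ r, s} (μ_k - λ)` (`det_perturbDiag`), independently of the sign
of `t`, so the whole determinant is the square of this.
-/

open Finset

/-- The `2n×2n` diagonal matrix `diag(μ₁, μ₁, μ₂, μ₂, …, μₙ, μₙ)` (0-indexed: entry `i`
is `μ_{⌊i/2⌋}`). -/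
def dblDiag (n : ℕ) (μ : Fin n → ℝ) : Matrix (Fin (2 * n)) (Fin (2 * n)) ℝ :=
  Matrix.diagonal fun i => μ ⟨(i : ℕ) / 2, by have := i.isLt; omega⟩

/-- The basis matrix `E_{2r−1,2s}` (1-based indexing as in the paper; here `r s : Fin n`
are 0-based, so the 1-based indices `2r−1, 2r, 2s−1, 2s` correspond to the 0-based
indices `2r, 2r+1, 2s, 2s+1`): entries `1` at `(2r−1,2s)` and `(2s,2r−1)`, `−1` at
`(2r,2s−1)` and `(2s−1,2r)`, `0` elsewhere. -/
def matEodd (n : ℕ) (r s : Fin n) : Matrix (Fin (2 * n)) (Fin (2 * n)) ℝ :=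
  Matrix.of fun i j =>
    if (i : ℕ) = 2 * (r : ℕ) ∧ (j : ℕ) = 2 * (s : ℕ) + 1 then 1
    else if (i : ℕ) = 2 * (s : ℕ) + 1 ∧ (j : ℕ) = 2 * (r : ℕ) then 1
    else if (i : ℕ) = 2 * (r : ℕ) + 1 ∧ (j : ℕ) = 2 * (s : ℕ) then -1
    else if (i : ℕ) = 2 * (s : ℕ) ∧ (j : ℕ) = 2 * (r : ℕ) + 1 then -1
    else 0

/-- The symmetric matrix with diagonal `d` and the extra entry `c` at positions `(r, s)` and
`(s, r)`. -/
def perturbDiag {ι : Type*} [DecidableEq ι] (d : ι → ℝ) (r s : ι) (c : ℝ) : Matrix ι ι ℝ :=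
  Matrix.of fun i j =>
    if i = j then d i else if i = r ∧ j = s then c else if i = s ∧ j = r then c else 0

theorem prod_split_pair {ι : Type*} [Fintype ι] [DecidableEq ι] (f : ι → ℝ) {r s : ι}
    (hrs : r ≠ s) :
    ∏ i, f i = f r * f s * ∏ k ∈ Finset.univ.filter fun k : ι => k ≠ r ∧ k ≠ s, f k := by
  have h : (Finset.univ.filter fun k : ι => k ≠ r ∧ k ≠ s) = (Finset.univ.erase r).erase s := by
    ext k; simp [and_comm]
  rw [h, mul_assoc, Finset.mul_prod_erase _ f (by simp [hrs.symm]),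
    Finset.mul_prod_erase _ f (by simp)]

/-- In the Leibniz expansion only the identity and the transposition `(r s)` contribute. -/
theorem det_perturbDiag {ι : Type*} [Fintype ι] [DecidableEq ι] (d : ι → ℝ) {r s : ι}
    (hrs : r ≠ s) (c : ℝ) :
    (perturbDiag d r s c).det =
      (d r * d s - c ^ 2) * ∏ k ∈ Finset.univ.filter fun k : ι => k ≠ r ∧ k ≠ s, d k := by
  have hne : (1 : Equiv.Perm ι) ≠ Equiv.swap r s := fun h => by
    have := congrArg (fun σ : Equiv.Perm ι => σ r) h
    simp at this
    exact hrs this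
  rw [Matrix.det_apply', Fintype.sum_eq_add 1 (Equiv.swap r s) hne]
  · rw [prod_split_pair _ hrs, prod_split_pair _ hrs, Equiv.Perm.sign_swap hrs]
    have hP : ∏ k ∈ Finset.univ.filter (fun k : ι => k ≠ r ∧ k ≠ s),
        perturbDiag d r s c (Equiv.swap r s k) k =
        ∏ k ∈ Finset.univ.filter (fun k : ι => k ≠ r ∧ k ≠ s), d k := by
      refine Finset.prod_congr rfl fun k hk => ?_
      simp only [Finset.mem_filter, Finset.mem_univ, true_and] at hk
      rw [Equiv.swap_apply_of_ne_of_ne hk.1 hk.2]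
      simp [perturbDiag]
    rw [hP]
    simp [perturbDiag, hrs, hrs.symm]
    ring
  · rintro σ ⟨h1, h2⟩
    by_contra h
    have hM : ∀ i, perturbDiag d r s c (σ i) i ≠ 0 := fun i hi =>
      h (mul_eq_zero_of_right _ (Finset.prod_eq_zero (Finset.mem_univ i) hi))
    have hM' : ∀ i, σ i = i ∨ (σ i = r ∧ i = s) ∨ (σ i = s ∧ i = r) := fun i => by
      have := hM i
      simp only [perturbDiag, Matrix.of_apply] at this
      grind
    have hfix : ∀ i, i ≠ r → i ≠ s → σ i = i := fun i hr hs => by grind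
    have hinj := σ.injective
    rcases hM' r with hr | hr | hr
    · refine h1 (Equiv.ext fun i => ?_)
      have h3 := hM' i
      have h4 : σ i = σ r → i = r := fun h => hinj h
      simp only [Equiv.Perm.one_apply]
      grind
    · exact hrs hr.2
    · refine h2 (Equiv.ext fun i => ?_)
      have h3 := hM' s
      have h4 : σ s = σ r → s = r := fun h => hinj h
      have h5 := hfix i
      rw [Equiv.swap_apply_def]
      grind

/-- The regrouping of the `2n` indices that decouples the perturbation: the pair `(k, b)` goes to
`2k + b`, except that the two indices over `s` are exchanged. The perturbation then couples
`(r, b)` only with `(s, b)`. -/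
def decoupleEquiv (n : ℕ) (s : Fin n) : Fin n × Fin 2 ≃ Fin (2 * n) where
  toFun p := ⟨2 * p.1 + (if p.1 = s then 1 - (p.2 : ℕ) else p.2), by
    have := p.1.isLt; have := p.2.isLt; split_ifs <;> omega⟩
  invFun i := (⟨(i : ℕ) / 2, by have := i.isLt; omega⟩,
    ⟨if (i : ℕ) / 2 = s then 1 - (i : ℕ) % 2 else (i : ℕ) % 2, by split_ifs <;> omega⟩)
  left_inv := by
    rintro ⟨k, b⟩
    have := b.isLt
    ext
    · simp only; split_ifs <;> omega
    · simp only [Fin.ext_iff]; split_ifs <;> omega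
  right_inv := by
    intro i
    ext
    simp only [Fin.ext_iff]
    split_ifs <;> omega

theorem submatrix_decouple (n : ℕ) (μ : Fin n → ℝ) (r s : Fin n) (hrs : r < s) (t lam : ℝ) :
    (dblDiag n μ + t • matEodd n r s
        - lam • (1 : Matrix (Fin (2 * n)) (Fin (2 * n)) ℝ)).submatrix
          (decoupleEquiv n s) (decoupleEquiv n s)
      = Matrix.blockDiagonal fun b : Fin 2 =>
          perturbDiag (fun k => μ k - lam) r s (if b = 0 then t else -t) := by
  ext ⟨k, b⟩ ⟨l, c⟩
  have hdiv : (⟨(decoupleEquiv n s (k, b) : ℕ) / 2, by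
      have := (decoupleEquiv n s (k, b)).isLt; omega⟩ : Fin n) = k :=
    congrArg Prod.fst ((decoupleEquiv n s).symm_apply_apply (k, b))
  have hval : ∀ p, (decoupleEquiv n s p : ℕ) =
    2 * p.1 + (if p.1 = s then 1 - (p.2 : ℕ) else p.2) := fun p => rfl
  have hrs' : r ≠ s := hrs.ne
  have hrs'' : (r : ℕ) ≠ s := by omega
  simp only [Matrix.submatrix_apply, Matrix.sub_apply, Matrix.add_apply, Matrix.smul_apply,
    dblDiag, Matrix.diagonal_apply, Matrix.one_apply, (decoupleEquiv n s).injective.eq_iff,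
    hdiv, matEodd, Matrix.of_apply, Matrix.blockDiagonal_apply, perturbDiag, Prod.mk.injEq,
    smul_eq_mul]
  simp only [hval, Fin.ext_iff]
  have hb := b.isLt
  have hc := c.isLt
  -- The four conditions defining the perturbation, in terms of the pairs `(k, b)` and `(l, c)`.
  have e1 : ((2 * (k : ℕ) + if (k : ℕ) = s then 1 - (b : ℕ) else b) = 2 * r ∧
      (2 * (l : ℕ) + if (l : ℕ) = s then 1 - (c : ℕ) else c) = 2 * s + 1) ↔
      ((k : ℕ) = r ∧ (b : ℕ) = 0 ∧ (l : ℕ) = s ∧ (c : ℕ) = 0) := by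
    split_ifs <;> omega
  have e2 : ((2 * (k : ℕ) + if (k : ℕ) = s then 1 - (b : ℕ) else b) = 2 * s + 1 ∧
      (2 * (l : ℕ) + if (l : ℕ) = s then 1 - (c : ℕ) else c) = 2 * r) ↔
      ((k : ℕ) = s ∧ (b : ℕ) = 0 ∧ (l : ℕ) = r ∧ (c : ℕ) = 0) := by
    split_ifs <;> omega
  have e3 : ((2 * (k : ℕ) + if (k : ℕ) = s then 1 - (b : ℕ) else b) = 2 * r + 1 ∧
      (2 * (l : ℕ) + if (l : ℕ) = s then 1 - (c : ℕ) else c) = 2 * s) ↔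
      ((k : ℕ) = r ∧ (b : ℕ) = 1 ∧ (l : ℕ) = s ∧ (c : ℕ) = 1) := by
    split_ifs <;> omega
  have e4 : ((2 * (k : ℕ) + if (k : ℕ) = s then 1 - (b : ℕ) else b) = 2 * s ∧
      (2 * (l : ℕ) + if (l : ℕ) = s then 1 - (c : ℕ) else c) = 2 * r + 1) ↔
      ((k : ℕ) = s ∧ (b : ℕ) = 1 ∧ (l : ℕ) = r ∧ (c : ℕ) = 1) := by
    split_ifs <;> omega
  simp only [e1, e2, e3, e4, Fin.val_zero]
  grind

/-- the characteristic determinant of `D + t·E_{2r−1,2s}`. -/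
theorem det_perturb_odd (n : ℕ) (hn : 2 ≤ n) (μ : Fin n → ℝ) (r s : Fin n) (hrs : r < s)
    (t lam : ℝ) :
    (dblDiag n μ + t • matEodd n r s
        - lam • (1 : Matrix (Fin (2 * n)) (Fin (2 * n)) ℝ)).det
      = (lam ^ 2 - lam * (μ r + μ s) + μ r * μ s - t ^ 2) ^ 2 *
        ∏ k ∈ Finset.univ.filter fun k : Fin n => k ≠ r ∧ k ≠ s, (μ k - lam) ^ 2 := by
  rw [← Matrix.det_submatrix_equiv_self (decoupleEquiv n s), submatrix_decouple n μ r s hrs,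
    Matrix.det_blockDiagonal, Fin.prod_univ_two, det_perturbDiag _ hrs.ne,
    det_perturbDiag _ hrs.ne, Finset.prod_pow]
  simp
  ring
end

section
/- Let n ≥ 2, μ ∈ ℝⁿ, and let D be the 2n×2n real diagonal matrix D = diag(μ₁, μ₁, μ₂, μ₂, …, μₙ, μₙ). For 1 ≤ r < s ≤ n let E_{2r,2s} be the 2n×2n real symmetric matrix whose entries are 1 at positions (2r,2s), (2s,2r), (2r−1,2s−1) and (2s−1,2r−1), and 0 elsewhere. Then for all t, λ ∈ ℝ: det(D + t·E_{2r,2s} − λ·Id) = (λ² − λ(μ_r + μ_s) + μ_r μ_s − t²)² · ∏_{k ∈ {1,…,n}, k ≠ r, s} (μ_k − λ)². -/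
/-!
Listing the even (0-based) indices before the odd ones turns `D + t·E_{2r,2s} - λ·Id` into a
block diagonal matrix with two equal `n×n` blocks, `diag(μ - λ)` with extra entries `t` at `(r,s)`
and `(s,r)` (`perturb_submatrix`). The determinant is therefore the square of that of one block,
which is `((μ_r - λ)(μ_s - λ) - t²) ∏_{k ≠ r,s} (μ_k - λ)` (`det_pairMat`).
-/

open Finset

/-- The basis matrix `E_{2r,2s}` (1-based indexing as in the paper; here `r s : Fin n`
are 0-based, so the 1-based indices `2r−1, 2r, 2s−1, 2s` correspond to the 0-based
indices `2r, 2r+1, 2s, 2s+1`): entries `1` at `(2r,2s)`, `(2s,2r)`, `(2r−1,2s−1)` and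
`(2s−1,2r−1)`, `0` elsewhere. -/
def matEeven (n : ℕ) (r s : Fin n) : Matrix (Fin (2 * n)) (Fin (2 * n)) ℝ :=
  Matrix.of fun i j =>
    if (i : ℕ) = 2 * (r : ℕ) + 1 ∧ (j : ℕ) = 2 * (s : ℕ) + 1 then 1
    else if (i : ℕ) = 2 * (s : ℕ) + 1 ∧ (j : ℕ) = 2 * (r : ℕ) + 1 then 1
    else if (i : ℕ) = 2 * (r : ℕ) ∧ (j : ℕ) = 2 * (s : ℕ) then 1
    else if (i : ℕ) = 2 * (s : ℕ) ∧ (j : ℕ) = 2 * (r : ℕ) then 1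
    else 0

/-- The `n×n` matrix `diag(d)` with additional entries `t` at `(r,s)` and `(s,r)` (for
`r ≠ s`; when `r = s` it is just `diag(d)`). -/
def pairMat {n : ℕ} (d : Fin n → ℝ) (r s : Fin n) (t : ℝ) : Matrix (Fin n) (Fin n) ℝ :=
  Matrix.of fun i j =>
    if i = j then d i else if (i = r ∧ j = s) ∨ (i = s ∧ j = r) then t else 0

/-- In the Leibniz expansion only the identity and the transposition `(r s)` contribute. -/
lemma det_pairMat {n : ℕ} (d : Fin n → ℝ) (r s : Fin n) (hrs : r ≠ s) (t : ℝ) :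
    (pairMat d r s t).det = (d r * d s - t ^ 2) *
      ∏ k ∈ Finset.univ.filter fun k : Fin n => k ≠ r ∧ k ≠ s, d k := by
  have hsplit : ∀ f : Fin n → ℝ, ∏ i, f i =
      f r * f s * ∏ k ∈ Finset.univ.filter fun k : Fin n => k ≠ r ∧ k ≠ s, f k := by
    intro f
    rw [← Finset.mul_prod_erase univ f (mem_univ r),
      ← Finset.mul_prod_erase (univ.erase r) f (a := s) (by simp [hrs.symm]), mul_assoc]
    congr 3
    ext k
    simp [and_comm]
  have hne : (1 : Equiv.Perm (Fin n)) ≠ Equiv.swap r s := by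
    intro h
    exact hrs (by simpa using congrArg (fun σ => σ r) h)
  rw [Matrix.det_apply', ← Finset.sum_subset (Finset.subset_univ {1, Equiv.swap r s}),
    Finset.sum_pair hne, hsplit, hsplit]
  · have hoff : ∏ k ∈ Finset.univ.filter (fun k : Fin n => k ≠ r ∧ k ≠ s),
        pairMat d r s t (Equiv.swap r s k) k =
        ∏ k ∈ Finset.univ.filter (fun k : Fin n => k ≠ r ∧ k ≠ s), d k := by
      refine Finset.prod_congr rfl fun k hk => ?_
      simp only [Finset.mem_filter, Finset.mem_univ, true_and] at hk
      rw [Equiv.swap_apply_of_ne_of_ne hk.1 hk.2]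
      simp [pairMat]
    rw [hoff]
    simp [pairMat, hrs, hrs.symm, Equiv.Perm.sign_swap hrs]
    ring
  · -- A permutation with nonzero product moves no index other than `r` and `s`.
    intro σ _ hσ
    simp only [Finset.mem_insert, Finset.mem_singleton, not_or] at hσ
    by_contra hprod
    have hnz : ∀ i, pairMat d r s t (σ i) i ≠ 0 := fun i =>
      Finset.prod_ne_zero_iff.mp (right_ne_zero_of_mul hprod) i (mem_univ i)
    have hcase : ∀ i, σ i = i ∨ (σ i = r ∧ i = s) ∨ (σ i = s ∧ i = r) := by
      intro i
      by_contra hc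
      rw [not_or] at hc
      exact hnz i (by simp [pairMat, hc.1, hc.2])
    have hinj : σ r ≠ σ s := fun h => hrs (σ.injective h)
    rcases hcase r with h | h | h
    · refine hσ.1 (Equiv.ext fun i => ?_)
      rcases hcase i with h' | h' | h'
      · exact h'
      · exact absurd (by rw [h, ← h'.2, h'.1]) hinj
      · rw [h'.2, h]; rfl
    · exact absurd h.2 hrs
    · have hs : σ s = r := by
        rcases hcase s with h' | h' | h'
        · exact absurd (by rw [h.1, h']) hinj
        · exact h'.1
        · exact absurd h'.2.symm hrs
      refine hσ.2 (Equiv.ext fun i => ?_)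
      rcases hcase i with h' | h' | h'
      · have hir : i ≠ r := fun e => hrs (by rw [e, h.1] at h'; exact h'.symm)
        have his : i ≠ s := fun e => hrs (by rw [e, hs] at h'; exact h')
        rw [h', Equiv.swap_apply_of_ne_of_ne hir his]
      · rw [h'.2, hs, Equiv.swap_apply_right]
      · rw [h'.2, h.1, Equiv.swap_apply_left]

/-- The index bijection `(k, ε) ↦ 2k + ε`. -/
def pairIdx (n : ℕ) : Fin n × Fin 2 ≃ Fin (2 * n) :=
  finProdFinEquiv.trans (finCongr (mul_comm n 2))

lemma pairIdx_val (n : ℕ) (p : Fin n × Fin 2) :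
    (pairIdx n p : ℕ) = 2 * (p.1 : ℕ) + (p.2 : ℕ) := by
  simp [pairIdx, add_comm]

/-- Splitting the indices by parity gives two copies of the same `n×n` matrix. -/
lemma perturb_submatrix (n : ℕ) (μ : Fin n → ℝ) (r s : Fin n) (hrs : r ≠ s) (t lam : ℝ) :
    (dblDiag n μ + t • matEeven n r s
        - lam • (1 : Matrix (Fin (2 * n)) (Fin (2 * n)) ℝ)).submatrix (pairIdx n) (pairIdx n)
      = Matrix.blockDiagonal fun _ : Fin 2 => pairMat (fun k => μ k - lam) r s t := by
  have hrs' : (r : ℕ) ≠ s := fun h => hrs (Fin.ext h)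
  ext ⟨i, a⟩ ⟨j, b⟩
  simp only [Matrix.submatrix_apply, Matrix.sub_apply, Matrix.add_apply, Matrix.smul_apply,
    dblDiag, matEeven, Matrix.diagonal_apply, Matrix.one_apply, Matrix.of_apply,
    Matrix.blockDiagonal_apply, pairMat, (pairIdx n).injective.eq_iff, pairIdx_val,
    Prod.mk.injEq, smul_eq_mul, Fin.ext_iff]
  fin_cases a <;> fin_cases b <;> simp <;> grind

/-- the characteristic determinant of `D + t·E_{2r,2s}`. -/
theorem det_perturb_even (n : ℕ) (hn : 2 ≤ n) (μ : Fin n → ℝ) (r s : Fin n) (hrs : r < s)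
    (t lam : ℝ) :
    (dblDiag n μ + t • matEeven n r s
        - lam • (1 : Matrix (Fin (2 * n)) (Fin (2 * n)) ℝ)).det
      = (lam ^ 2 - lam * (μ r + μ s) + μ r * μ s - t ^ 2) ^ 2 *
        ∏ k ∈ Finset.univ.filter fun k : Fin n => k ≠ r ∧ k ≠ s, (μ k - lam) ^ 2 := by
  rw [← Matrix.det_submatrix_equiv_self (pairIdx n), perturb_submatrix n μ r s hrs.ne,
    Matrix.det_blockDiagonal, Finset.prod_const, det_pairMat _ _ _ hrs.ne, Finset.prod_pow]
  simp only [Finset.card_univ, Fintype.card_fin]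
  ring
end
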